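/- (Tancer's tightness) For every integer d ≥ 1 there exists a finite abstract simplicial complex Δ of dimension d, on some finite vertex set V, that is not 2d-representable: there is no family (U_v)_{v ∈ V} of convex subsets of ℝ^{2d} such that for every nonempty subset σ ⊆ V, σ is a face of Δ if and only if ⋂_{v ∈ σ} U_v ≠ ∅. -/

import Mathlib

/-!
The complex is the barycentric subdivision of the `d`-skeleton of a simplex with `3 * (d + 1)`
vertices. If convex sets `U ρ` realized it as their nerve, choose a point `x F` in `⋂ ρ ∈ F, U ρ`
for every flag `F`. The affine extension of `x` over the second barycentric subdivision maps each
face `σ` of the skeleton into the union of the sets `U ρ` with `ρ ⊆ σ`, and `U ρ`, `U ρ'` are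
disjoint when `ρ` and `ρ'` are, since disjoint sets do not form a flag. So disjoint faces have
disjoint images, contrary to van Kampen–Flores.

The required case of van Kampen–Flores is proved with chains modulo two. The deleted join of the
skeleton contains a join of `d + 1` hexagons, a sphere with an antipodal cell structure of
dimension `2 * d + 1`. Homogenize the points and attach a minus sign to those in the second factor
of the join: two convex hulls are then disjoint only if the vectors lie in an open halfspace, a
condition that survives a small perturbation into general position. In general position, the
number of `k`-simplices whose open cone, in the first `k` coordinates, contains the origin is the
coboundary of the number of `(k - 1)`-simplices whose open cone contains a half-axis, and the
antipodal sum of the latter is the number for `k - 1`. Hence the count modulo two over the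
`k`-dimensional hemisphere does not depend on `k`; it is one for a point, so that some simplex of
dimension `2 * d + 1` is not contained in an open halfspace.
-/

namespace VanKampenFlores

open Filter Finset MvPolynomial Topology

section Parity

variable {V 𝕜 : Type*} [DecidableEq V] [Field 𝕜] [LinearOrder 𝕜] [IsStrictOrderedRing 𝕜]

-- With `w j = u j * r j`, the numbers `u j * (r j - t)` are the entries of `w - t • u`; both sides
-- count, modulo two, the end points of the interval of those `t` where all entries are positive.
theorem sum_ite_forall_mul_sub_pos {s : Finset V} {u r : V → 𝕜} (hu : ∀ v ∈ s, u v ≠ 0)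
    (hr : Set.InjOn r s) :
    (∑ i ∈ s, if ∀ j ∈ s, j ≠ i → 0 < u j * (r j - r i) then (1 : ZMod 2) else 0) =
      (if ∀ v ∈ s, 0 < u v then 1 else 0) + if ∀ v ∈ s, u v < 0 then 1 else 0 := by
  induction s using Finset.induction_on_max_value r with
  | empty => simpa using (CharTwo.add_self_eq_zero (1 : ZMod 2)).symm
  | insert a s ha hmax ih =>
    have ih := ih (fun v hv ↦ hu v (mem_insert_of_mem hv)) (hr.mono (by simp))
    have hlt : ∀ x ∈ s, r x < r a := fun x hx ↦ (hmax x hx).lt_of_ne fun h ↦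
      ha (hr (mem_insert_of_mem hx) (mem_insert_self a s) h ▸ hx)
    have term_a : (∀ j ∈ insert a s, j ≠ a → 0 < u j * (r j - r a)) ↔ ∀ v ∈ s, u v < 0 := by
      simp only [forall_mem_insert, ne_eq, not_true_eq_false, false_imp_iff, true_and]
      refine forall₂_congr fun j hj ↦ ?_
      simp [ne_of_mem_of_not_mem hj ha, mul_pos_iff, hlt j hj, (hlt j hj).not_gt]
    have term_s : ∀ i ∈ s, (∀ j ∈ insert a s, j ≠ i → 0 < u j * (r j - r i)) ↔
        0 < u a ∧ ∀ j ∈ s, j ≠ i → 0 < u j * (r j - r i) := by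
      intro i hi
      simp [(ne_of_mem_of_not_mem hi ha).symm, mul_pos_iff_of_pos_right (sub_pos.2 (hlt i hi))]
    rw [sum_insert ha, if_congr term_a rfl rfl,
      sum_congr rfl fun i hi ↦ if_congr (term_s i hi) rfl rfl]
    simp only [forall_mem_insert]
    rcases (hu a (mem_insert_self a s)).lt_or_gt with h | h
    · simp [h, h.not_gt]
    · simp only [h, h.not_gt, true_and, false_and, if_false, add_zero, ih]
      rw [add_left_comm, CharTwo.add_self_eq_zero, add_zero]

end Parity

section Relations

variable {V 𝕜 : Type*} [Field 𝕜]

/-- The vectors `g v`, `v ∈ S`, are in general position with respect to the coordinate flag: for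
`k ≤ m`, any `k` of them have linearly independent truncations to the first `k` coordinates.
Vectors are encoded as sequences so that all truncation lengths live in one type. -/
def GeneralPositionOn (g : V → ℕ → 𝕜) (m : ℕ) (S : Set V) : Prop :=
  ∀ k ≤ m, ∀ t : Finset V, (t : Set V) ⊆ S → #t = k →
    LinearIndepOn 𝕜 (fun v (j : Fin k) ↦ g v j) (t : Set V)

/-- The `j`-th coordinate of the linear combination of the vectors `g v` with given weights. -/
noncomputable def coord (g : V → ℕ → 𝕜) (j : ℕ) : (V →₀ 𝕜) →ₗ[𝕜] 𝕜 :=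
  Finsupp.linearCombination 𝕜 fun v ↦ g v j

/-- The linear relations supported on `s` between the truncations of the vectors `g v` to their
first `k` coordinates. -/
noncomputable def relations (g : V → ℕ → 𝕜) (k : ℕ) (s : Finset V) : Submodule 𝕜 (V →₀ 𝕜) :=
  Finsupp.supported 𝕜 𝕜 s ⊓
    LinearMap.ker (Finsupp.linearCombination 𝕜 fun v (j : Fin k) ↦ g v j)

variable {g : V → ℕ → 𝕜} {k m : ℕ} {s t : Finset V} {l : V →₀ 𝕜}

theorem coord_neg (j : ℕ) : coord (-g) j l = -coord g j l := by
  simp [coord, Finsupp.linearCombination_apply, Finsupp.sum]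

theorem mem_relations :
    l ∈ relations g k s ↔ l.support ⊆ s ∧ ∀ j < k, coord g j l = 0 := by
  have hcoord (j : Fin k) :
      Finsupp.linearCombination 𝕜 (fun v (j : Fin k) ↦ g v j) l j = coord g j l := by
    simp [coord, Finsupp.linearCombination_apply, Finsupp.sum]
  simp [relations, Finsupp.mem_supported, funext_iff, hcoord, Fin.forall_iff]

theorem mem_relations_succ :
    l ∈ relations g (k + 1) s ↔ l ∈ relations g k s ∧ coord g k l = 0 := by
  simp only [mem_relations, Nat.forall_lt_succ_right, and_assoc]

theorem mem_relations_erase [DecidableEq V] {i : V} :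
    l ∈ relations g k (s.erase i) ↔ l ∈ relations g k s ∧ l i = 0 := by
  simp only [mem_relations, subset_erase, Finsupp.notMem_support_iff]
  tauto

theorem relations_neg : relations (-g) k s = relations g k s := by
  ext l
  simp only [mem_relations, coord_neg, neg_eq_zero]

theorem exists_mem_relations_ne_zero (h : k < #s) : ∃ l ∈ relations g k s, l ≠ 0 := by
  by_contra! hrel
  have hindep : LinearIndepOn 𝕜 (fun v (j : Fin k) ↦ g v j) (s : Set V) :=
    linearIndepOn_iff.2 fun l hl h0 ↦ hrel l ⟨hl, h0⟩
  have hcard : #s ≤ k := by simpa using LinearIndependent.fintype_card_le_finrank hindep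
  omega

namespace GeneralPositionOn

theorem eq_zero_of_mem_relations (h : GeneralPositionOn g m s) (hk : k ≤ m) (hts : t ⊆ s)
    (ht : #t = k) (hl : l ∈ relations g k t) : l = 0 :=
  linearIndepOn_iff.1 (h k hk t hts ht) l hl.1 hl.2

theorem eq_zero_of_apply_eq_zero (h : GeneralPositionOn g m s) (hk : k ≤ m) (hs : #s = k + 1)
    (hl : l ∈ relations g k s) {i : V} (hi : i ∈ s) (h0 : l i = 0) : l = 0 := by
  classical
  exact h.eq_zero_of_mem_relations hk (erase_subset i s)
    (by rw [card_erase_of_mem hi, hs, Nat.add_sub_cancel]) (mem_relations_erase.2 ⟨hl, h0⟩)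

end GeneralPositionOn

end Relations

section Cochains

variable {V 𝕜 : Type*} [Field 𝕜] [LinearOrder 𝕜]

open scoped Classical in
/-- The cochain that is `1` on a `k`-simplex `s` whenever the open cone spanned by the
truncations of the `g v`, `v ∈ s`, to the first `k` coordinates contains the origin. -/
noncomputable def originCochain (g : V → ℕ → 𝕜) (k : ℕ) (s : Finset V) : ZMod 2 :=
  if #s = k + 1 ∧ ∃ l ∈ relations g k s, ∀ v ∈ s, 0 < l v then 1 else 0

open scoped Classical in
/-- The cochain that is `1` on a `k`-simplex `s` whenever the open cone spanned by the
truncations of the `g v`, `v ∈ s`, to the first `k + 1` coordinates contains the positive half of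
the last coordinate axis. -/
noncomputable def rayCochain (g : V → ℕ → 𝕜) (k : ℕ) (s : Finset V) : ZMod 2 :=
  if #s = k + 1 ∧ ∃ l ∈ relations g k s, (∀ v ∈ s, 0 < l v) ∧ 0 < coord g k l then 1 else 0

variable {g : V → ℕ → 𝕜} {k m : ℕ} {s : Finset V} {l l' : V →₀ 𝕜}

theorem GeneralPositionOn.coord_ne_zero (h : GeneralPositionOn g m s) (hk : k < m)
    (hs : #s = k + 1) (hl : l ∈ relations g k s) (hpos : ∀ v ∈ s, 0 < l v) :
    coord g k l ≠ 0 := by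
  intro h0
  obtain ⟨v, hv⟩ : s.Nonempty := card_pos.1 (by omega)
  have hl0 : l = 0 :=
    h.eq_zero_of_mem_relations hk subset_rfl hs (mem_relations_succ.2 ⟨hl, h0⟩)
  simpa [hl0] using hpos v hv

variable [IsStrictOrderedRing 𝕜]

theorem GeneralPositionOn.coord_pos_of_coord_pos (h : GeneralPositionOn g m s) (hk : k < m)
    (hs : #s = k + 1) (hl : l ∈ relations g k s) (hpos : ∀ v ∈ s, 0 < l v)
    (hl' : l' ∈ relations g k s) (hpos' : ∀ v ∈ s, 0 < l' v) (hc : 0 < coord g k l) :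
    0 < coord g k l' := by
  by_contra hneg
  have hc' : coord g k l' < 0 :=
    lt_of_le_of_ne (not_lt.1 hneg) (h.coord_ne_zero hk hs hl' hpos')
  refine h.coord_ne_zero hk hs (l := coord g k l • l' - coord g k l' • l)
    (sub_mem (Submodule.smul_mem _ _ hl') (Submodule.smul_mem _ _ hl)) (fun v hv ↦ ?_) ?_
  · have h₁ := mul_pos hc (hpos' v hv)
    have h₂ := mul_neg_of_neg_of_pos hc' (hpos v hv)
    simp only [Finsupp.sub_apply, Finsupp.smul_apply, smul_eq_mul]
    linarith
  · simp only [map_sub, map_smul, smul_eq_mul]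
    ring

open scoped Classical in
theorem rayCochain_neg : rayCochain (-g) k s =
    if #s = k + 1 ∧ ∃ l ∈ relations g k s, (∀ v ∈ s, 0 < l v) ∧ coord g k l < 0
    then 1 else 0 :=
  if_congr (by simp only [relations_neg, coord_neg, Left.neg_pos_iff]) rfl rfl

theorem originCochain_eq_rayCochain_add_rayCochain_neg (h : GeneralPositionOn g m s)
    (hk : k < m) : originCochain g k s = rayCochain g k s + rayCochain (-g) k s := by
  rw [rayCochain_neg, originCochain, rayCochain]
  by_cases hs : #s = k + 1
  swap
  · simp [hs]
  by_cases hex : ∃ l ∈ relations g k s, ∀ v ∈ s, 0 < l v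
  swap
  · rw [if_neg (fun H ↦ hex H.2), if_neg, if_neg, add_zero] <;>
      exact fun ⟨_, l, hl, hpos, _⟩ ↦ hex ⟨l, hl, hpos⟩
  obtain ⟨l, hl, hpos⟩ := hex
  rw [if_pos ⟨hs, l, hl, hpos⟩]
  rcases (h.coord_ne_zero hk hs hl hpos).lt_or_gt with hc | hc
  · rw [if_neg, if_pos ⟨hs, l, hl, hpos, hc⟩, zero_add]
    rintro ⟨-, l', hl', hpos', hc'⟩
    exact hc.not_gt (h.coord_pos_of_coord_pos hk hs hl' hpos' hl hpos hc')
  · rw [if_pos ⟨hs, l, hl, hpos, hc⟩, if_neg, add_zero]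
    rintro ⟨-, l', hl', hpos', hc'⟩
    exact hc'.not_gt (h.coord_pos_of_coord_pos hk hs hl hpos hl' hpos' hc)

end Cochains

section Pencil

variable {V 𝕜 : Type*} [Field 𝕜] {g : V → ℕ → 𝕜} {k m : ℕ} {s : Finset V} {l u w : V →₀ 𝕜}

theorem GeneralPositionOn.exists_coord_eq_one (h : GeneralPositionOn g m s) (hk : k + 1 ≤ m)
    (hs : #s = k + 2) : ∃ w ∈ relations g k s, coord g k w = 1 := by
  classical
  obtain ⟨i, hi⟩ : s.Nonempty := card_pos.1 (by omega)
  obtain ⟨w, hw, hw0⟩ : ∃ w ∈ relations g k (s.erase i), w ≠ 0 :=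
    exists_mem_relations_ne_zero (by rw [card_erase_of_mem hi]; omega)
  obtain ⟨hw, hwi⟩ := mem_relations_erase.1 hw
  have hc : coord g k w ≠ 0 := fun hc ↦
    hw0 (h.eq_zero_of_apply_eq_zero hk hs (mem_relations_succ.2 ⟨hw, hc⟩) hi hwi)
  exact ⟨(coord g k w)⁻¹ • w, Submodule.smul_mem _ _ hw, by simp [hc]⟩

theorem GeneralPositionOn.injOn_div (h : GeneralPositionOn g m s) (hk : k + 1 ≤ m)
    (hs : #s = k + 2) (hu : u ∈ relations g (k + 1) s) (hu0 : ∀ v ∈ s, u v ≠ 0)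
    (hw : w ∈ relations g k s) (hw1 : coord g k w = 1) :
    Set.InjOn (fun v ↦ w v / u v) s := by
  classical
  intro a ha b hb hab
  by_contra hne
  obtain ⟨hu, huk⟩ := mem_relations_succ.1 hu
  have hmem : w - (w a / u a) • u ∈ relations g k ((s.erase a).erase b) := by
    refine mem_relations_erase.2 ⟨mem_relations_erase.2
      ⟨sub_mem hw (Submodule.smul_mem _ _ hu), ?_⟩, ?_⟩
    · simp [hu0 a ha]
    · beta_reduce at hab
      simp [hab, hu0 b hb]
  have hcard : #((s.erase a).erase b) = k := by
    rw [card_erase_of_mem (mem_erase.2 ⟨Ne.symm hne, hb⟩), card_erase_of_mem ha, hs]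
    rfl
  have hzero := h.eq_zero_of_mem_relations (by omega)
    ((erase_subset _ _).trans (erase_subset _ _)) hcard hmem
  have hone : (1 : 𝕜) = 0 := by simpa [huk, hw1] using congrArg (coord g k) hzero
  exact one_ne_zero hone

variable [LinearOrder 𝕜] [IsStrictOrderedRing 𝕜]

theorem GeneralPositionOn.rayCochain_erase [DecidableEq V] (h : GeneralPositionOn g m s)
    (hk : k + 1 ≤ m) (hs : #s = k + 2) (hu : u ∈ relations g (k + 1) s) (hu0 : ∀ v ∈ s, u v ≠ 0)
    (hw : w ∈ relations g k s) (hw1 : coord g k w = 1) {i : V} (hi : i ∈ s) :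
    rayCochain g k (s.erase i) =
      if ∀ j ∈ s, j ≠ i → 0 < u j * (w j / u j - w i / u i) then 1 else 0 := by
  have hcard : #(s.erase i) = k + 1 := by rw [card_erase_of_mem hi, hs]; rfl
  obtain ⟨huk, huk0⟩ := mem_relations_succ.1 hu
  set q := w - (w i / u i) • u with hq
  have hqs : q ∈ relations g k s := sub_mem hw (Submodule.smul_mem _ _ huk)
  have hqi : q i = 0 := by simp [hq, hu0 i hi]
  have hqc : coord g k q = 1 := by simp [hq, hw1, huk0]
  have hq_apply : ∀ j ∈ s, u j * (w j / u j - w i / u i) = q j := by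
    intro j hj
    simp only [hq, Finsupp.sub_apply, Finsupp.smul_apply, smul_eq_mul]
    field_simp [hu0 j hj]
  classical
  refine if_congr ?_ rfl rfl
  simp only [hcard, true_and, mem_erase, and_imp]
  constructor
  · rintro ⟨l, hl, hpos, hc⟩ j hj hji
    obtain ⟨hl, hli⟩ := mem_relations_erase.1 hl
    have hlq : l - coord g k l • q = 0 := by
      refine h.eq_zero_of_apply_eq_zero hk hs (mem_relations_succ.2
        ⟨sub_mem hl (Submodule.smul_mem _ _ hqs), ?_⟩) hi ?_ <;> simp [hqc, hli, hqi]
    have hlj : l j = coord g k l * q j := by simpa using DFunLike.congr_fun (sub_eq_zero.1 hlq) j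
    rw [hq_apply j hj]
    exact pos_of_mul_pos_right (hlj ▸ hpos j hji hj) hc.le
  · intro hpos
    exact ⟨q, mem_relations_erase.2 ⟨hqs, hqi⟩,
      fun j hji hj ↦ hq_apply j hj ▸ hpos j hj hji, hqc ▸ one_pos⟩

theorem GeneralPositionOn.originCochain_eq_ite_add_ite (h : GeneralPositionOn g m s) (hk : k ≤ m)
    (hs : #s = k + 1) (hu : u ∈ relations g k s) (hu0 : ∀ v ∈ s, u v ≠ 0) :
    originCochain g k s =
      (if ∀ v ∈ s, 0 < u v then 1 else 0) + if ∀ v ∈ s, u v < 0 then 1 else 0 := by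
  obtain ⟨i, hi⟩ : s.Nonempty := card_pos.1 (by omega)
  by_cases hpos : ∀ v ∈ s, 0 < u v
  · rw [if_pos hpos, if_neg fun hneg ↦ (hpos i hi).not_gt (hneg i hi), add_zero]
    exact if_pos ⟨hs, u, hu, hpos⟩
  by_cases hneg : ∀ v ∈ s, u v < 0
  · rw [if_neg hpos, if_pos hneg, zero_add]
    exact if_pos ⟨hs, -u, neg_mem hu, by simpa using hneg⟩
  rw [if_neg hpos, if_neg hneg, add_zero]
  refine if_neg ?_
  rintro ⟨-, l, hl, hlpos⟩
  have hlu : l - (l i / u i) • u = 0 :=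
    h.eq_zero_of_apply_eq_zero hk hs (sub_mem hl (Submodule.smul_mem _ _ hu)) hi
      (by simp [hu0 i hi])
  have hmul : ∀ v ∈ s, 0 < l i / u i * u v := fun v hv ↦ by
    have hlv : l v = l i / u i * u v := by simpa using DFunLike.congr_fun (sub_eq_zero.1 hlu) v
    exact hlv ▸ hlpos v hv
  rcases (hu0 i hi).lt_or_gt with hui | hui
  · exact hneg fun v hv ↦
      neg_of_mul_pos_right (hmul v hv) (div_neg_of_pos_of_neg (hlpos i hi) hui).le
  · exact hpos fun v hv ↦ pos_of_mul_pos_right (hmul v hv) (div_pos (hlpos i hi) hui).le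

theorem originCochain_succ [DecidableEq V] (h : GeneralPositionOn g m s) (hk : k + 1 ≤ m) :
    originCochain g (k + 1) s = ∑ i ∈ s, rayCochain g k (s.erase i) := by
  by_cases hs : #s = k + 2
  swap
  · rw [originCochain, if_neg fun H ↦ hs H.1, sum_eq_zero]
    intro i hi
    have hi' := card_erase_add_one hi
    exact if_neg fun H ↦ hs (by omega)
  obtain ⟨u, hu, hune⟩ : ∃ u ∈ relations g (k + 1) s, u ≠ 0 :=
    exists_mem_relations_ne_zero (by omega)
  have hu0 : ∀ v ∈ s, u v ≠ 0 := fun v hv hv0 ↦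
    hune (h.eq_zero_of_apply_eq_zero hk hs hu hv hv0)
  obtain ⟨w, hw, hw1⟩ := h.exists_coord_eq_one hk hs
  calc originCochain g (k + 1) s
      = (if ∀ v ∈ s, 0 < u v then 1 else 0) + if ∀ v ∈ s, u v < 0 then 1 else 0 :=
        h.originCochain_eq_ite_add_ite hk hs hu hu0
    _ = ∑ i ∈ s, if ∀ j ∈ s, j ≠ i → 0 < u j * (w j / u j - w i / u i) then 1 else 0 :=
        (sum_ite_forall_mul_sub_pos hu0 (h.injOn_div hk hs hu hu0 hw hw1)).symm
    _ = ∑ i ∈ s, rayCochain g k (s.erase i) :=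
        sum_congr rfl fun _ hi ↦ (h.rayCochain_erase hk hs hu hu0 hw hw1 hi).symm

end Pencil

section Chains

/-- Simplicial chains modulo two on the vertex set `V`. The simplex with vertex set `A` is encoded
as the squarefree monomial `∏ i ∈ A, X i`, so that products of chains on disjoint vertex sets are
their joins and the empty simplex is `1`; monomials that are not squarefree have no meaning. -/
abbrev Chain (V : Type*) := MvPolynomial V (ZMod 2)

/-- The chain consisting of the single simplex with vertex set `A`. -/
noncomputable def simplex {V : Type*} (A : Finset V) : Chain V := ∏ i ∈ A, X i

/-- The augmented simplicial boundary, as the derivation that sends every vertex to `1`. -/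
noncomputable def boundary {V : Type*} : Chain V →ₗ[ZMod 2] Chain V :=
  (mkDerivation (ZMod 2) fun _ ↦ 1).toLinearMap

/-- The linear extension to chains of a function `f` defined on simplices. -/
noncomputable def extend {V M : Type*} [AddCommGroup M] [Module (ZMod 2) M] (f : Finset V → M) :
    Chain V →ₗ[ZMod 2] M :=
  (basisMonomials V (ZMod 2)).constr (ZMod 2) fun m ↦ f m.support

/-- The chains that are sums of simplices from `S`. -/
noncomputable def chainsOn {V : Type*} (S : Set (Finset V)) : Submodule (ZMod 2) (Chain V) :=
  Submodule.span (ZMod 2) (simplex '' S)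

variable {V V' M : Type*} {p q : Chain V} {S T R : Set (Finset V)}

theorem simplex_empty : simplex (∅ : Finset V) = 1 := rfl

theorem simplex_singleton (v : V) : simplex {v} = X v := prod_singleton _ _

theorem simplex_insert [DecidableEq V] {A : Finset V} {v : V} (hv : v ∉ A) :
    simplex (insert v A) = X v * simplex A :=
  prod_insert hv

theorem simplex_union [DecidableEq V] {A B : Finset V} (h : Disjoint A B) :
    simplex (A ∪ B) = simplex A * simplex B :=
  prod_union h

theorem simplex_disjSum (B : Finset V) (C : Finset V') :
    simplex (B.disjSum C) = rename Sum.inl (simplex B) * rename Sum.inr (simplex C) := by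
  simp [simplex, prod_disjSum, map_prod]

theorem boundary_X (v : V) : boundary (X v) = 1 := by simp [boundary]

theorem boundary_one : boundary (1 : Chain V) = 0 := by simp [boundary]

theorem boundary_mul (p q : Chain V) :
    boundary (p * q) = p * boundary q + q * boundary p := by
  simp [boundary]

theorem boundary_rename (f : V → V') (p : Chain V) :
    boundary (rename f p) = rename f (boundary p) := by
  induction p using MvPolynomial.induction_on with
  | C a => simp [boundary]
  | add p q hp hq => simp [hp, hq]
  | mul_X p v hp => simp [boundary_mul, hp, boundary_X]

theorem boundary_boundary (p : Chain V) : boundary (boundary p) = 0 := by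
  induction p using MvPolynomial.induction_on with
  | C a => simp [boundary]
  | add p q hp hq => simp [hp, hq]
  | mul_X p v hp => simp [boundary_mul, hp, boundary_X, CharTwo.add_self_eq_zero]

theorem boundary_simplex [DecidableEq V] (A : Finset V) :
    boundary (simplex A) = ∑ i ∈ A, simplex (A.erase i) := by
  induction A using Finset.induction_on with
  | empty => simp [simplex_empty, boundary_one]
  | insert a A ha ih =>
    have herase : ∀ i ∈ A, simplex ((insert a A).erase i) = X a * simplex (A.erase i) := by
      intro i hi
      rw [erase_insert_of_ne (ne_of_mem_of_not_mem hi ha).symm,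
        simplex_insert fun h ↦ ha (mem_of_mem_erase h)]
    rw [simplex_insert ha, boundary_mul, boundary_X, mul_one, ih, sum_insert ha, erase_insert ha,
      sum_congr rfl herase, mul_sum, add_comm]

theorem extend_simplex [AddCommGroup M] [Module (ZMod 2) M] (f : Finset V → M) (A : Finset V) :
    extend f (simplex A) = f A := by
  classical
  have hA : simplex A = basisMonomials V (ZMod 2) (∑ i ∈ A, Finsupp.single i 1) := by
    simp only [coe_basisMonomials, monomial_sum_one, simplex, X]
  rw [hA, extend, Module.Basis.constr_basis]
  congr 1
  ext i
  simp [Finsupp.finsetSum_apply, Finsupp.single_apply]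

theorem simplex_mem_chainsOn {A : Finset V} (hA : A ∈ S) : simplex A ∈ chainsOn S :=
  Submodule.subset_span ⟨A, hA, rfl⟩

theorem chainsOn_mono (h : S ⊆ T) : chainsOn S ≤ chainsOn T :=
  Submodule.span_mono (Set.image_mono h)

section Linear

variable [AddCommGroup M] [Module (ZMod 2) M] {f f' : Chain V →ₗ[ZMod 2] M}

theorem eq_of_mem_chainsOn (h : ∀ A ∈ S, f (simplex A) = f' (simplex A)) (hp : p ∈ chainsOn S) :
    f p = f' p :=
  LinearMap.eqOn_span (Set.forall_mem_image.2 h) hp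

theorem map_mem_of_mem_chainsOn {N : Submodule (ZMod 2) M} (h : ∀ A ∈ S, f (simplex A) ∈ N)
    (hp : p ∈ chainsOn S) : f p ∈ N := by
  have hle : chainsOn S ≤ N.comap f := Submodule.span_le.2 (Set.forall_mem_image.2 h)
  exact hle hp

end Linear

open scoped Pointwise in
theorem mul_mem_chainsOn [DecidableEq V]
    (h : ∀ A ∈ S, ∀ B ∈ T, Disjoint A B ∧ A ∪ B ∈ R) (hp : p ∈ chainsOn S)
    (hq : q ∈ chainsOn T) : p * q ∈ chainsOn R := by
  have hpq : p * q ∈ Submodule.span (ZMod 2) (simplex '' S * simplex '' T) := by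
    rw [← Submodule.span_mul_span]
    exact Submodule.mul_mem_mul hp hq
  refine Submodule.span_le.2 ?_ hpq
  rintro _ ⟨_, ⟨A, hA, rfl⟩, _, ⟨B, hB, rfl⟩, rfl⟩
  obtain ⟨hAB, hR⟩ := h A hA B hB
  have hmem : simplex A * simplex B ∈ chainsOn R := simplex_union hAB ▸ simplex_mem_chainsOn hR
  exact hmem

theorem rename_inl_mul_rename_inr_mem_chainsOn {q : Chain V'} {T : Set (Finset V')}
    (hp : p ∈ chainsOn S) (hq : q ∈ chainsOn T) :
    rename Sum.inl p * rename Sum.inr q ∈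
      chainsOn {A : Finset (V ⊕ V') | A.toLeft ∈ S ∧ A.toRight ∈ T} := by
  refine map_mem_of_mem_chainsOn
    (f := LinearMap.mulRight (ZMod 2) (rename Sum.inr q) ∘ₗ (rename Sum.inl).toLinearMap)
    (fun B hB ↦ ?_) hp
  refine map_mem_of_mem_chainsOn
    (f := LinearMap.mulLeft (ZMod 2) (rename Sum.inl (simplex B)) ∘ₗ (rename Sum.inr).toLinearMap)
    (fun C hC ↦ ?_) hq
  simp only [LinearMap.comp_apply, AlgHom.toLinearMap_apply, LinearMap.mulLeft_apply,
    ← simplex_disjSum]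
  exact simplex_mem_chainsOn (by simpa using ⟨hB, hC⟩)

end Chains

section CarriedChainMap

variable {V W L : Type*}

/-- An augmentation-preserving chain map that sends vertices to vertices and is carried by `c`:
the image of the simplex `σ` is a sum of simplices from `c σ`. The conditions only concern the
meaningful monomials, that is, the simplices. -/
structure IsCarriedChainMap (φ : Chain V →ₗ[ZMod 2] Chain L) (c : Finset V → Set (Finset L)) :
    Prop where
  map_one : φ 1 = 1
  map_X : ∀ v, ∃ w, φ (X v) = X w
  boundary_map_simplex : ∀ σ, boundary (φ (simplex σ)) = φ (boundary (simplex σ))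
  map_simplex_mem : ∀ σ, φ (simplex σ) ∈ chainsOn (c σ)

theorem IsCarriedChainMap.comp {φ : Chain V →ₗ[ZMod 2] Chain W} {ψ : Chain W →ₗ[ZMod 2] Chain L}
    {c : Finset V → Set (Finset W)} {c' : Finset W → Set (Finset L)}
    (hψ : IsCarriedChainMap ψ c') (hφ : IsCarriedChainMap φ c) :
    IsCarriedChainMap (ψ ∘ₗ φ) fun σ ↦ ⋃ A ∈ c σ, c' A where
  map_one := by rw [LinearMap.comp_apply, hφ.map_one, hψ.map_one]
  map_X v := by
    obtain ⟨w, hw⟩ := hφ.map_X v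
    rw [LinearMap.comp_apply, hw]
    exact hψ.map_X w
  boundary_map_simplex σ := by
    simp only [LinearMap.comp_apply]
    rw [← hφ.boundary_map_simplex]
    exact eq_of_mem_chainsOn (f := boundary ∘ₗ ψ) (f' := ψ ∘ₗ boundary)
      (fun A _ ↦ hψ.boundary_map_simplex A) (hφ.map_simplex_mem σ)
  map_simplex_mem σ := map_mem_of_mem_chainsOn (f := ψ)
    (fun A hA ↦ chainsOn_mono (Set.subset_biUnion_of_mem hA) (hψ.map_simplex_mem A))
    (hφ.map_simplex_mem σ)

end CarriedChainMap

section Subdivision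

variable {α : Type*} [DecidableEq α]

/-- The barycentric subdivision of a single simplex: the cone, with apex the barycentre `A`, over
the subdivision of its boundary. -/
noncomputable def sdSimplex (A : Finset α) : Chain (Finset α) :=
  if A = ∅ then 1 else X A * ∑ i : A, sdSimplex (A.erase i)
termination_by #A
decreasing_by exact card_erase_lt_of_mem i.2

/-- Barycentric subdivision as a map on chains. -/
noncomputable def sd : Chain α →ₗ[ZMod 2] Chain (Finset α) := extend sdSimplex

/-- The flags of nonempty subsets of `A`, that is, the simplices of the barycentric subdivision
of the simplex `A`. -/
def flags {α : Type*} (A : Finset α) : Set (Finset (Finset α)) :=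
  {F | (∀ B ∈ F, B.Nonempty ∧ B ⊆ A) ∧ IsChain (· ⊆ ·) (F : Set (Finset α))}

theorem flags_mono {α : Type*} {A B : Finset α} (h : A ⊆ B) : flags A ⊆ flags B :=
  fun _ hF ↦ ⟨fun C hC ↦ ⟨(hF.1 C hC).1, (hF.1 C hC).2.trans h⟩, hF.2⟩

theorem insert_mem_flags {A : Finset α} (hA : A.Nonempty) {F : Finset (Finset α)}
    (hF : F ∈ flags A) : insert A F ∈ flags A := by
  refine ⟨(forall_mem_insert _ _ _).2 ⟨⟨hA, subset_rfl⟩, hF.1⟩, ?_⟩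
  rw [coe_insert]
  exact hF.2.insert fun B hB _ ↦ Or.inr (hF.1 B hB).2

theorem sd_one : sd (1 : Chain α) = 1 := by
  rw [← simplex_empty, sd, extend_simplex, sdSimplex, if_pos rfl]

theorem sd_simplex {A : Finset α} (hA : A.Nonempty) :
    sd (simplex A) = X A * sd (boundary (simplex A)) := by
  rw [boundary_simplex, map_sum]
  simp only [sd, extend_simplex]
  rw [sdSimplex, if_neg hA.ne_empty, sum_coe_sort A fun i ↦ sdSimplex (A.erase i)]

theorem boundary_sd_simplex (A : Finset α) :
    boundary (sd (simplex A)) = sd (boundary (simplex A)) := by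
  induction A using Finset.strongInduction with
  | H A ih =>
    obtain rfl | hA := A.eq_empty_or_nonempty
    · rw [simplex_empty, sd_one, boundary_one, boundary_one, map_zero]
    have hcycle : boundary (sd (boundary (simplex A))) = 0 := calc
      boundary (sd (boundary (simplex A))) = sd (boundary (boundary (simplex A))) := by
        rw [boundary_simplex]
        simp only [map_sum]
        exact sum_congr rfl fun i hi ↦ ih _ (erase_ssubset hi)
      _ = 0 := by rw [boundary_boundary, map_zero]
    rw [sd_simplex hA, boundary_mul, hcycle, boundary_X, mul_zero, zero_add, mul_one]

theorem sd_simplex_mem (A : Finset α) : sd (simplex A) ∈ chainsOn (flags A) := by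
  induction A using Finset.strongInduction with
  | H A ih =>
    obtain rfl | hA := A.eq_empty_or_nonempty
    · rw [simplex_empty, sd_one, ← simplex_empty]
      exact simplex_mem_chainsOn ⟨by simp, by simp⟩
    rw [sd_simplex hA, boundary_simplex, map_sum, mul_sum]
    refine sum_mem fun i hi ↦ ?_
    refine map_mem_of_mem_chainsOn (f := LinearMap.mulLeft (ZMod 2) (X A)) (fun F hF ↦ ?_)
      (ih _ (erase_ssubset hi))
    have hAF : A ∉ F := fun h ↦ notMem_erase i A ((hF.1 A h).2 hi)
    rw [LinearMap.mulLeft_apply, ← simplex_insert hAF]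
    exact simplex_mem_chainsOn (insert_mem_flags hA (flags_mono (erase_subset i A) hF))

theorem isCarriedChainMap_sd : IsCarriedChainMap (sd (α := α)) flags where
  map_one := sd_one
  map_X v := ⟨{v}, by
    rw [← simplex_singleton, sd_simplex (singleton_nonempty v), simplex_singleton, boundary_X,
      sd_one, mul_one]⟩
  boundary_map_simplex := boundary_sd_simplex
  map_simplex_mem := sd_simplex_mem

end Subdivision

section Join

variable {W L : Type*}

/-- The involution of a join that exchanges its two sides. -/
noncomputable def swap : Chain (L ⊕ L) →ₐ[ZMod 2] Chain (L ⊕ L) := rename Sum.swap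

theorem swap_X (v : L ⊕ L) : swap (X v) = X v.swap := rename_X _ _

theorem swap_swap (p : Chain (L ⊕ L)) : swap (swap p) = p := by
  rw [swap, rename_rename, Sum.swap_swap_eq, rename_id_apply]

theorem boundary_swap (p : Chain (L ⊕ L)) : boundary (swap p) = swap (boundary p) :=
  boundary_rename _ p

theorem swap_rename_inl_mul_rename_inr (p q : Chain L) :
    swap (rename Sum.inl p * rename Sum.inr q) = rename Sum.inl q * rename Sum.inr p := by
  rw [swap, map_mul, rename_rename, rename_rename, mul_comm]
  rfl

theorem swap_simplex_disjSum (B C : Finset L) :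
    swap (simplex (B.disjSum C)) = simplex (C.disjSum B) := by
  rw [simplex_disjSum, simplex_disjSum, swap_rename_inl_mul_rename_inr]

/-- The join of a map on chains with itself. -/
noncomputable def joinMap (φ : Chain W →ₗ[ZMod 2] Chain L) :
    Chain (W ⊕ W) →ₗ[ZMod 2] Chain (L ⊕ L) :=
  extend fun A ↦ rename Sum.inl (φ (simplex A.toLeft)) * rename Sum.inr (φ (simplex A.toRight))

/-- The pairs of simplices, regarded as simplices of the join, that lie in the carriers of a pair
of simplices from `D`. -/
def joinCarrier (c : Finset W → Set (Finset L)) (D : Set (Finset (W ⊕ W))) :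
    Set (Finset (L ⊕ L)) :=
  {A | ∃ B ∈ D, A.toLeft ∈ c B.toLeft ∧ A.toRight ∈ c B.toRight}

variable {φ : Chain W →ₗ[ZMod 2] Chain L} {c : Finset W → Set (Finset L)}
  {D : Set (Finset (W ⊕ W))} {p : Chain (W ⊕ W)}

theorem joinMap_simplex_disjSum (B C : Finset W) :
    joinMap φ (simplex (B.disjSum C)) =
      rename Sum.inl (φ (simplex B)) * rename Sum.inr (φ (simplex C)) := by
  rw [joinMap, extend_simplex, toLeft_disjSum, toRight_disjSum]

theorem joinMap_swap (hp : p ∈ chainsOn D) : joinMap φ (swap p) = swap (joinMap φ p) := by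
  refine eq_of_mem_chainsOn (f := joinMap φ ∘ₗ swap.toLinearMap)
    (f' := swap.toLinearMap ∘ₗ joinMap φ) (fun A _ ↦ ?_) hp
  rw [← toLeft_disjSum_toRight (u := A)]
  simp only [LinearMap.comp_apply, AlgHom.toLinearMap_apply, swap_simplex_disjSum,
    joinMap_simplex_disjSum, swap_rename_inl_mul_rename_inr]

namespace IsCarriedChainMap

theorem boundary_joinMap_simplex_disjSum (hφ : IsCarriedChainMap φ c) (B C : Finset W) :
    boundary (joinMap φ (simplex (B.disjSum C))) =
      joinMap φ (boundary (simplex (B.disjSum C))) := by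
  classical
  rw [joinMap_simplex_disjSum, boundary_mul, boundary_rename, boundary_rename,
    hφ.boundary_map_simplex, hφ.boundary_map_simplex, simplex_disjSum, boundary_mul,
    boundary_rename, boundary_rename, boundary_simplex, boundary_simplex]
  simp only [map_add, map_sum, mul_sum]
  congr 1
  · simp only [← simplex_disjSum, joinMap_simplex_disjSum]
  · simp only [mul_comm (rename Sum.inr _), ← simplex_disjSum, joinMap_simplex_disjSum]

theorem boundary_joinMap (hφ : IsCarriedChainMap φ c) (hp : p ∈ chainsOn D) :
    boundary (joinMap φ p) = joinMap φ (boundary p) := by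
  refine eq_of_mem_chainsOn (f := boundary ∘ₗ joinMap φ) (f' := joinMap φ ∘ₗ boundary)
    (fun A _ ↦ ?_) hp
  rw [← toLeft_disjSum_toRight (u := A)]
  exact hφ.boundary_joinMap_simplex_disjSum _ _

theorem joinMap_mem (hφ : IsCarriedChainMap φ c) (hp : p ∈ chainsOn D) :
    joinMap φ p ∈ chainsOn (joinCarrier c D) := by
  refine map_mem_of_mem_chainsOn (fun A hA ↦ ?_) hp
  rw [← toLeft_disjSum_toRight (u := A), joinMap_simplex_disjSum]
  have hmem := rename_inl_mul_rename_inr_mem_chainsOn (hφ.map_simplex_mem A.toLeft)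
    (hφ.map_simplex_mem A.toRight)
  refine chainsOn_mono (fun B hB ↦ ?_) hmem
  exact ⟨A, hA, hB⟩

theorem exists_joinMap_X (hφ : IsCarriedChainMap φ c) (v : W ⊕ W) :
    ∃ w, joinMap φ (X v) = X w := by
  rcases v with v | v <;> obtain ⟨w, hw⟩ := hφ.map_X v
  · refine ⟨Sum.inl w, ?_⟩
    have h := joinMap_simplex_disjSum (φ := φ) {v} ∅
    simpa [simplex, hφ.map_one, hw] using h
  · refine ⟨Sum.inr w, ?_⟩
    have h := joinMap_simplex_disjSum (φ := φ) ∅ {v}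
    simpa [simplex, hφ.map_one, hw] using h

end IsCarriedChainMap

end Join

section Antipodal

variable {V L 𝕜 : Type*}

/-- The antipodal configuration `g, -g`, indexed by two disjoint copies of the index type. -/
def signed [Neg 𝕜] (g : L → ℕ → 𝕜) : L ⊕ L → ℕ → 𝕜 := Sum.elim g (-g)

/-- The algebraic counterpart of a `ℤ/2`-map from the `n`-sphere, with its antipodal cell structure
having cells `h k` and `swap (h k)` in dimension `k`, to the `swap`-invariant complex `D`. -/
structure IsAntipodalTower (D : Set (Finset (L ⊕ L))) (n : ℕ) (h : ℕ → Chain (L ⊕ L)) : Prop where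
  zero : ∃ v, h 0 = X v
  boundary_succ : ∀ k < n, boundary (h (k + 1)) = h k + swap (h k)
  mem : ∀ k ≤ n, h k ∈ chainsOn D

theorem IsAntipodalTower.map {W : Type*} {φ : Chain W →ₗ[ZMod 2] Chain L}
    {c : Finset W → Set (Finset L)} {D : Set (Finset (W ⊕ W))} {n : ℕ} {h : ℕ → Chain (W ⊕ W)}
    (hh : IsAntipodalTower D n h) (hφ : IsCarriedChainMap φ c) :
    IsAntipodalTower (joinCarrier c D) n fun k ↦ joinMap φ (h k) where
  zero := by
    obtain ⟨v, hv⟩ := hh.zero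
    rw [hv]
    exact hφ.exists_joinMap_X v
  boundary_succ k hk := by
    rw [hφ.boundary_joinMap (hh.mem _ hk), hh.boundary_succ k hk, map_add,
      joinMap_swap (hh.mem k hk.le)]
  mem k hk := hφ.joinMap_mem (hh.mem k hk)

theorem signed_comp_swap [InvolutiveNeg 𝕜] (g : L → ℕ → 𝕜) :
    signed g ∘ Sum.swap = -signed g := by
  ext (l | l) j <;> simp [signed]

section Field

variable [Field 𝕜]

theorem coord_equivMapDomain {V' : Type*} (e : V ≃ V') (g : V' → ℕ → 𝕜) (j : ℕ) (l : V →₀ 𝕜) :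
    coord g j (l.equivMapDomain e) = coord (g ∘ e) j l :=
  Finsupp.linearCombination_equivMapDomain 𝕜 e l

theorem equivMapDomain_mem_relations {V' : Type*} (e : V ≃ V') {g : V' → ℕ → 𝕜} {k : ℕ}
    {s : Finset V} {l : V →₀ 𝕜} :
    l.equivMapDomain e ∈ relations g k (s.map e.toEmbedding) ↔ l ∈ relations (g ∘ e) k s := by
  have hsupp : (l.equivMapDomain e).support = l.support.map e.toEmbedding := rfl
  simp only [mem_relations, coord_equivMapDomain, hsupp, map_subset_map]

theorem GeneralPositionOn.signed {g : L → ℕ → 𝕜} {m : ℕ} {A : Finset (L ⊕ L)}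
    (h : GeneralPositionOn g m Set.univ) (hA : Disjoint A.toLeft A.toRight) :
    GeneralPositionOn (signed g) m A := by
  classical
  intro k hk t ht htk
  have hinj : Set.InjOn (Sum.elim id id : L ⊕ L → L) t := by
    have hne {l l' : L} (hl : .inl l ∈ t) (hl' : .inr l' ∈ t) : l ≠ l' :=
      disjoint_iff_ne.1 hA l (mem_toLeft.2 (ht hl)) l' (mem_toRight.2 (ht hl'))
    rintro (l | l) hl (l' | l') hl' (rfl : l = l')
    exacts [rfl, (hne hl hl' rfl).elim, (hne hl' hl rfl).elim, rfl]
  have himage := h k hk (t.image (Sum.elim id id)) (Set.subset_univ _)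
    ((card_image_of_injOn hinj).trans htk)
  rw [coe_image] at himage
  have hindep := (himage.comp_of_image hinj).units_smul
    fun v ↦ (Sum.elim (fun _ ↦ 1) (fun _ ↦ -1) v.1 : 𝕜ˣ)
  unfold LinearIndepOn
  convert hindep using 1
  ext ⟨l | l, hl⟩ j <;> simp [VanKampenFlores.signed]

end Field

section Ordered

variable [Field 𝕜] [LinearOrder 𝕜]

theorem rayCochain_map {V' : Type*} (e : V ≃ V') (g : V' → ℕ → 𝕜) (k : ℕ) (s : Finset V) :
    rayCochain g k (s.map e.toEmbedding) = rayCochain (g ∘ e) k s := by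
  classical
  refine if_congr (and_congr (by rw [card_map]) ?_) rfl rfl
  rw [(Finsupp.domCongr (M := 𝕜) e).surjective.exists]
  simp only [Finsupp.domCongr_apply, equivMapDomain_mem_relations, coord_equivMapDomain,
    forall_mem_map, Equiv.coe_toEmbedding, Finsupp.equivMapDomain_apply, Equiv.symm_apply_apply]

theorem extend_rayCochain_signed_swap (g : L → ℕ → 𝕜) (k : ℕ) (A : Finset (L ⊕ L)) :
    extend (rayCochain (signed g) k) (swap (simplex A)) = rayCochain (-signed g) k A := by
  have hswap : swap (simplex A) = simplex (A.map (Equiv.sumComm L L).toEmbedding) := by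
    simp [swap, simplex]
  rw [hswap, extend_simplex, rayCochain_map, ← signed_comp_swap]
  rfl

variable [IsStrictOrderedRing 𝕜]

theorem originCochain_zero_singleton (g : V → ℕ → 𝕜) (v : V) : originCochain g 0 {v} = 1 :=
  if_pos ⟨card_singleton v, Finsupp.single v 1, by simp [mem_relations], by simp⟩

variable {D : Set (Finset (L ⊕ L))} {n : ℕ} {g : L → ℕ → 𝕜}

theorem extend_originCochain (hg : ∀ A ∈ D, GeneralPositionOn (signed g) n A) {k : ℕ} (hk : k < n)
    {p : Chain (L ⊕ L)} (hp : p ∈ chainsOn D) :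
    extend (originCochain (signed g) k) p = extend (rayCochain (signed g) k) (p + swap p) := by
  rw [map_add]
  refine eq_of_mem_chainsOn (f' := extend (rayCochain (signed g) k) +
    extend (rayCochain (signed g) k) ∘ₗ swap.toLinearMap) (fun A hA ↦ ?_) hp
  rw [LinearMap.add_apply, LinearMap.comp_apply, AlgHom.toLinearMap_apply,
    extend_rayCochain_signed_swap, extend_simplex, extend_simplex,
    originCochain_eq_rayCochain_add_rayCochain_neg (hg A hA) hk]

theorem extend_originCochain_succ (hg : ∀ A ∈ D, GeneralPositionOn (signed g) n A) {k : ℕ}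
    (hk : k < n) {p : Chain (L ⊕ L)} (hp : p ∈ chainsOn D) :
    extend (originCochain (signed g) (k + 1)) p =
      extend (rayCochain (signed g) k) (boundary p) := by
  classical
  refine eq_of_mem_chainsOn (f' := extend (rayCochain (signed g) k) ∘ₗ boundary)
    (fun A hA ↦ ?_) hp
  rw [LinearMap.comp_apply, boundary_simplex, map_sum, extend_simplex,
    originCochain_succ (hg A hA) hk]
  simp only [extend_simplex]

theorem IsAntipodalTower.extend_originCochain {h : ℕ → Chain (L ⊕ L)}
    (hh : IsAntipodalTower D n h) (hg : ∀ A ∈ D, GeneralPositionOn (signed g) n A) {k : ℕ}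
    (hk : k ≤ n) : extend (originCochain (signed g) k) (h k) = 1 := by
  induction k with
  | zero =>
    obtain ⟨v, hv⟩ := hh.zero
    rw [hv, ← simplex_singleton, extend_simplex, originCochain_zero_singleton]
  | succ k ih =>
    rw [extend_originCochain_succ hg hk (hh.mem _ hk), hh.boundary_succ k hk,
      ← VanKampenFlores.extend_originCochain hg hk (hh.mem k (by omega)), ih (by omega)]

theorem IsAntipodalTower.exists_originCochain_ne_zero {h : ℕ → Chain (L ⊕ L)}
    (hh : IsAntipodalTower D n h) (hg : ∀ A ∈ D, GeneralPositionOn (signed g) n A) :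
    ∃ A ∈ D, originCochain (signed g) n A ≠ 0 := by
  by_contra! hzero
  have h0 : extend (originCochain (signed g) n) (h n) = 0 :=
    eq_of_mem_chainsOn (f' := 0) (fun A hA ↦ by rw [extend_simplex, hzero A hA]; rfl)
      (hh.mem n le_rfl)
  rw [hh.extend_originCochain hg le_rfl] at h0
  exact one_ne_zero h0

end Ordered

end Antipodal

section GeneralPosition

variable {L : Type*}

theorem eventually_cofinite_det_smul_add_ne_zero {ι R : Type*} [Fintype ι] [DecidableEq ι]
    [CommRing R] [IsDomain R] {A : Matrix ι ι R} (hA : A.det ≠ 0) (B : Matrix ι ι R) :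
    ∀ᶠ ε : R in cofinite, (ε • A + B).det ≠ 0 := by
  set p : Polynomial R :=
    ((Polynomial.X : Polynomial R) • A.map Polynomial.C + B.map Polynomial.C).det with hp
  have hp0 : p ≠ 0 := by
    intro h0
    apply hA
    rw [← Polynomial.coeff_det_X_add_C_card A B, ← hp, h0, Polynomial.coeff_zero]
  have heval (ε : R) : p.eval ε = (ε • A + B).det := by
    rw [hp, ← Polynomial.coe_evalRingHom, RingHom.map_det]
    congr 1
    ext i j
    simp only [Matrix.add_apply, Matrix.smul_apply, Matrix.map_apply, RingHom.mapMatrix_apply,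
      Polynomial.coe_evalRingHom, Polynomial.eval_add, Polynomial.eval_C, smul_eq_mul,
      Polynomial.eval_mul, Polynomial.eval_X]
  refine eventually_cofinite.2 ((Polynomial.finite_setOfPred_isRoot hp0).subset fun ε hε ↦ ?_)
  exact (heval ε).trans (not_not.1 hε)

theorem eventually_cofinite_linearIndepOn_add_pow {𝕜 : Type*} [Field 𝕜] {t : L → 𝕜}
    (ht : Function.Injective t) (g : L → ℕ → 𝕜) (s : Finset L) :
    ∀ᶠ ε in cofinite,
      LinearIndepOn 𝕜 (fun v (j : Fin #s) ↦ ε * t v ^ (j : ℕ) + g v j) (s : Set L) := by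
  let e : Fin #s ≃ s := s.equivFin.symm
  have hdet : (Matrix.vandermonde fun i ↦ t (e i)).det ≠ 0 :=
    Matrix.det_vandermonde_ne_zero_iff.2 (ht.comp (Subtype.val_injective.comp e.injective))
  filter_upwards [eventually_cofinite_det_smul_add_ne_zero hdet (.of fun i j ↦ g (e i) j)]
    with ε hε
  exact (linearIndependent_equiv e).1 (Matrix.linearIndependent_rows_of_det_ne_zero hε)

theorem dense_setOf_generalPositionOn_univ [Finite L] (m : ℕ) :
    Dense {g : L → ℕ → ℝ | GeneralPositionOn g m Set.univ} := by
  intro g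
  obtain ⟨t, ht⟩ := exists_injective_nat L
  have hgeneral : ∀ᶠ ε in 𝓝[≠] (0 : ℝ),
      GeneralPositionOn (fun v j ↦ ε * (t v : ℝ) ^ j + g v j) m Set.univ := by
    have hindep := eventually_all.2 fun s ↦
      eventually_cofinite_linearIndepOn_add_pow (Nat.cast_injective (R := ℝ) |>.comp ht) g s
    filter_upwards [nhdsNE_le_cofinite 0 hindep] with ε hε k _ s _ hs
    subst hs
    exact hε s
  have htendsto : Tendsto (fun ε v j ↦ ε * (t v : ℝ) ^ j + g v j) (𝓝[≠] (0 : ℝ)) (𝓝 g) := by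
    have hcont : Continuous fun (ε : ℝ) v j ↦ ε * (t v : ℝ) ^ j + g v j := by fun_prop
    have h := hcont.tendsto 0
    simp only [zero_mul, zero_add] at h
    exact h.mono_left nhdsWithin_le_nhds
  exact mem_closure_of_tendsto htendsto hgeneral

end GeneralPosition

section OpenHalfspace

variable {V L 𝕜 : Type*} [Field 𝕜] [LinearOrder 𝕜] [IsStrictOrderedRing 𝕜]

/-- The truncations of the vectors `g v`, `v ∈ A`, to their first `n` coordinates lie in a common
open linear halfspace. -/
def InOpenHalfspace (g : V → ℕ → 𝕜) (n : ℕ) (A : Finset V) : Prop :=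
  ∃ y : ℕ → 𝕜, ∀ v ∈ A, 0 < ∑ j ∈ range n, y j * g v j

namespace InOpenHalfspace

theorem originCochain_eq_zero {g : V → ℕ → 𝕜} {n : ℕ} {A : Finset V}
    (h : InOpenHalfspace g n A) : originCochain g n A = 0 := by
  obtain ⟨y, hy⟩ := h
  refine if_neg ?_
  rintro ⟨hA, l, hl, hpos⟩
  rw [mem_relations] at hl
  have hcoord (j : ℕ) : coord g j l = ∑ v ∈ A, l v * g v j :=
    Finsupp.sum_of_support_subset l hl.1 _ fun v _ ↦ zero_smul 𝕜 _
  have hsum : ∑ v ∈ A, l v * ∑ j ∈ range n, y j * g v j = 0 := calc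
    _ = ∑ j ∈ range n, y j * coord g j l := by
      simp only [hcoord, mul_sum]
      rw [sum_comm]
      exact sum_congr rfl fun j _ ↦ sum_congr rfl fun v _ ↦ mul_left_comm _ _ _
    _ = 0 := sum_eq_zero fun j hj ↦ by rw [hl.2 j (mem_range.1 hj), mul_zero]
  exact (sum_pos (fun v hv ↦ mul_pos (hpos v hv) (hy v hv)) (card_pos.1 (by omega))).ne' hsum

theorem disjoint_toLeft_toRight {g : L → ℕ → 𝕜} {n : ℕ} {A : Finset (L ⊕ L)}
    (h : InOpenHalfspace (signed g) n A) : Disjoint A.toLeft A.toRight := by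
  obtain ⟨y, hy⟩ := h
  refine disjoint_left.2 fun l hl hr ↦ ?_
  have hleft := hy _ (mem_toLeft.1 hl)
  have hright := hy _ (mem_toRight.1 hr)
  simp only [signed, Sum.elim_inl, Sum.elim_inr, Pi.neg_apply, mul_neg, sum_neg_distrib]
    at hleft hright
  linarith

end InOpenHalfspace

theorem isOpen_setOf_inOpenHalfspace_signed (n : ℕ) (A : Finset (L ⊕ L)) :
    IsOpen {g : L → ℕ → ℝ | InOpenHalfspace (signed g) n A} := by
  have hcont (v : L ⊕ L) (j : ℕ) : Continuous fun g : L → ℕ → ℝ ↦ signed g v j := by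
    rcases v with l | l
    · exact continuous_apply_apply l j
    · exact (continuous_apply_apply l j).neg
  simp only [InOpenHalfspace, Set.ofPred_exists, Set.ofPred_forall]
  refine isOpen_iUnion fun y ↦ isOpen_biInter_finset fun v _ ↦ ?_
  exact isOpen_lt continuous_const
    (continuous_finsetSum _ fun j _ ↦ continuous_const.mul (hcont v j))

theorem IsAntipodalTower.exists_not_inOpenHalfspace [Finite L] {D : Set (Finset (L ⊕ L))} {n : ℕ}
    {h : ℕ → Chain (L ⊕ L)} (hh : IsAntipodalTower D n h) (g : L → ℕ → ℝ) :
    ∃ A ∈ D, ¬ InOpenHalfspace (signed g) n A := by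
  by_contra! hg
  have hopen : IsOpen (⋂ A ∈ D, {g : L → ℕ → ℝ | InOpenHalfspace (signed g) n A}) :=
    D.toFinite.isOpen_biInter fun A _ ↦ isOpen_setOf_inOpenHalfspace_signed n A
  obtain ⟨g', hhalf, hgeneral⟩ :=
    (dense_setOf_generalPositionOn_univ n).inter_open_nonempty _ hopen ⟨g, Set.mem_iInter₂.2 hg⟩
  rw [Set.mem_iInter₂] at hhalf
  obtain ⟨A, hA, hne⟩ := hh.exists_originCochain_ne_zero
    fun A hA ↦ GeneralPositionOn.signed hgeneral (hhalf A hA).disjoint_toLeft_toRight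
  exact hne (hhalf A hA).originCochain_eq_zero

end OpenHalfspace

section ConvexHull

variable {L E : Type*}

section Module

variable [AddCommGroup E] [Module ℝ E] [FiniteDimensional ℝ E]

/-- The homogeneous coordinates `1, p₁, …, pₙ, 0, 0, …` of a point `p`, where `n` is the dimension
of the space. -/
noncomputable def homogeneousCoords (p : E) : ℕ → ℝ
  | 0 => 1
  | j + 1 => if h : j < Module.finrank ℝ E then (Module.finBasis ℝ E).repr p ⟨j, h⟩ else 0

theorem exists_sum_mul_homogeneousCoords_eq (f : E →ₗ[ℝ] ℝ) (c : ℝ) :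
    ∃ y : ℕ → ℝ, ∀ p,
      ∑ j ∈ range (Module.finrank ℝ E + 1), y j * homogeneousCoords p j = f p + c := by
  let b := Module.finBasis ℝ E
  let y : ℕ → ℝ
    | 0 => c
    | j + 1 => if h : j < Module.finrank ℝ E then f (b ⟨j, h⟩) else 0
  refine ⟨y, fun p ↦ ?_⟩
  have hf : f p = ∑ i, f (b i) * b.repr p i := by
    conv_lhs => rw [← b.sum_repr p, map_sum]
    simp only [map_smul, smul_eq_mul, mul_comm]
  rw [sum_range_succ', sum_range, hf]
  simp [y, b, homogeneousCoords]

end Module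

variable [NormedAddCommGroup E] [NormedSpace ℝ E] [FiniteDimensional ℝ E]

theorem inOpenHalfspace_of_disjoint_convexHull {x : L → E} {A : Finset (L ⊕ L)}
    (h : Disjoint (convexHull ℝ (x '' A.toLeft)) (convexHull ℝ (x '' A.toRight))) :
    InOpenHalfspace (signed fun l ↦ homogeneousCoords (x l)) (Module.finrank ℝ E + 1) A := by
  obtain ⟨f, u, v, hleft, huv, hright⟩ := geometric_hahn_banach_compact_closed
    (convex_convexHull ℝ _) ((A.toLeft.finite_toSet.image x).isCompact_convexHull ℝ)
    (convex_convexHull ℝ _) ((A.toRight.finite_toSet.image x).isClosed_convexHull ℝ) h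
  obtain ⟨y, hy⟩ := exists_sum_mul_homogeneousCoords_eq (-(f : E →ₗ[ℝ] ℝ)) u
  refine ⟨y, ?_⟩
  rintro (l | l) hl
  · have hf := hleft (x l) (subset_convexHull ℝ _ ⟨l, mem_toLeft.2 hl, rfl⟩)
    simpa [signed, hy] using hf
  · have hf := hright (x l) (subset_convexHull ℝ _ ⟨l, mem_toRight.2 hl, rfl⟩)
    simpa [signed, hy] using huv.trans hf

theorem IsAntipodalTower.exists_convexHull_inter_nonempty [Finite L] {D : Set (Finset (L ⊕ L))}
    {h : ℕ → Chain (L ⊕ L)} (hh : IsAntipodalTower D (Module.finrank ℝ E + 1) h) (x : L → E) :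
    ∃ A ∈ D, (convexHull ℝ (x '' A.toLeft) ∩ convexHull ℝ (x '' A.toRight)).Nonempty := by
  obtain ⟨A, hA, hhalf⟩ := hh.exists_not_inOpenHalfspace fun l ↦ homogeneousCoords (x l)
  refine ⟨A, hA, Set.not_disjoint_iff_nonempty_inter.1 fun hdisj ↦ hhalf ?_⟩
  exact inOpenHalfspace_of_disjoint_convexHull hdisj

end ConvexHull

section DeletedJoin

variable {W L E : Type*}

/-- The pairs of disjoint simplices with at most `n` vertices each, all in `S`. -/
def deletedJoin (S : Set W) (n : ℕ) : Set (Finset (W ⊕ W)) :=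
  {A | Disjoint A.toLeft A.toRight ∧ (↑A.toLeft ⊆ S ∧ #A.toLeft ≤ n) ∧
    ↑A.toRight ⊆ S ∧ #A.toRight ≤ n}

theorem disjSum_mem_deletedJoin {S : Set W} {n : ℕ} {B C : Finset W} :
    B.disjSum C ∈ deletedJoin S n ↔
      Disjoint B C ∧ (↑B ⊆ S ∧ #B ≤ n) ∧ ↑C ⊆ S ∧ #C ≤ n := by
  simp only [deletedJoin, Set.mem_ofPred_eq, toLeft_disjSum, toRight_disjSum]

theorem deletedJoin_mono {S T : Set W} {m n : ℕ} (hST : S ⊆ T) (hmn : m ≤ n) :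
    deletedJoin S m ⊆ deletedJoin T n := fun _ hA ↦
  ⟨hA.1, ⟨hA.2.1.1.trans hST, hA.2.1.2.trans hmn⟩, hA.2.2.1.trans hST, hA.2.2.2.trans hmn⟩

theorem mul_mem_chainsOn_deletedJoin {S T : Set W} {m n : ℕ} {p q : Chain (W ⊕ W)}
    (hST : Disjoint S T) (hp : p ∈ chainsOn (deletedJoin S m))
    (hq : q ∈ chainsOn (deletedJoin T n)) : p * q ∈ chainsOn (deletedJoin (S ∪ T) (m + n)) := by
  classical
  refine mul_mem_chainsOn ?_ hp hq
  rintro A ⟨hA, ⟨hAS, hAm⟩, hAS', hAm'⟩ B ⟨hB, ⟨hBT, hBn⟩, hBT', hBn'⟩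
  have hdisj {C D : Finset W} (hC : ↑C ⊆ S) (hD : ↑D ⊆ T) : Disjoint C D :=
    disjoint_coe.1 (hST.mono hC hD)
  constructor
  · rw [disjoint_left]
    rintro (w | w) hwA hwB
    · exact disjoint_left.1 (hdisj hAS hBT) (mem_toLeft.2 hwA) (mem_toLeft.2 hwB)
    · exact disjoint_left.1 (hdisj hAS' hBT') (mem_toRight.2 hwA) (mem_toRight.2 hwB)
  · simp only [deletedJoin, Set.mem_ofPred_eq, toLeft_union, toRight_union, coe_union,
      disjoint_union_left, disjoint_union_right]
    exact ⟨⟨⟨hA, (hdisj hAS' hBT).symm⟩, hdisj hAS hBT', hB⟩,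
      ⟨Set.union_subset_union hAS hBT, (card_union_le _ _).trans (by omega)⟩,
      Set.union_subset_union hAS' hBT', (card_union_le _ _).trans (by omega)⟩

theorem X_inl_mem_chainsOn_deletedJoin {S : Set W} {v : W} (hv : v ∈ S) :
    X (.inl v) ∈ chainsOn (deletedJoin S 1) := by
  have hsimplex : (X (.inl v) : Chain (W ⊕ W)) = simplex (({v} : Finset W).disjSum ∅) := by
    simp [simplex]
  rw [hsimplex]
  exact simplex_mem_chainsOn (disjSum_mem_deletedJoin.2 (by simp [hv]))

theorem X_inl_mul_X_inr_mem_chainsOn_deletedJoin {S : Set W} {v w : W} (hv : v ∈ S) (hw : w ∈ S)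
    (hvw : v ≠ w) : X (.inl v) * X (.inr w) ∈ chainsOn (deletedJoin S 1) := by
  have hsimplex : (X (.inl v) * X (.inr w) : Chain (W ⊕ W)) =
      simplex (({v} : Finset W).disjSum {w}) := by
    simp [simplex]
  rw [hsimplex]
  exact simplex_mem_chainsOn (disjSum_mem_deletedJoin.2 (by simp [hv, hw, hvw]))

theorem swap_mem_chainsOn_deletedJoin {S : Set W} {n : ℕ} {p : Chain (W ⊕ W)}
    (hp : p ∈ chainsOn (deletedJoin S n)) : swap p ∈ chainsOn (deletedJoin S n) := by
  refine map_mem_of_mem_chainsOn (f := swap.toLinearMap) (fun A hA ↦ ?_) hp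
  rw [AlgHom.toLinearMap_apply, ← toLeft_disjSum_toRight (u := A), swap_simplex_disjSum]
  exact simplex_mem_chainsOn (disjSum_mem_deletedJoin.2 ⟨hA.1.symm, hA.2.2, hA.2.1⟩)

/-- Half of the hexagon that is the deleted join of the three points `a i` with themselves: a path
of edges from the first copy of `a 0` to the second one. -/
noncomputable def halfHexagon (a : Fin 3 → W) : Chain (W ⊕ W) :=
  X (.inl (a 0)) * X (.inr (a 1)) + X (.inl (a 2)) * X (.inr (a 1)) +
    X (.inl (a 2)) * X (.inr (a 0))

/-- The `(2 * n - 1)`-dimensional sphere that is the join of `n` hexagons. -/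
noncomputable def hexagonJoin (a : ℕ → Fin 3 → W) (n : ℕ) : Chain (W ⊕ W) :=
  ∏ i ∈ range n, (halfHexagon (a i) + swap (halfHexagon (a i)))

/-- The closed hemispheres of an antipodal cell structure on a join of hexagons. -/
noncomputable def hemisphere (a : ℕ → Fin 3 → W) (k : ℕ) : Chain (W ⊕ W) :=
  hexagonJoin a (k / 2) * if Even k then X (.inl (a (k / 2) 0)) else halfHexagon (a (k / 2))

theorem boundary_halfHexagon (a : Fin 3 → W) :
    boundary (halfHexagon a) = X (.inl (a 0)) + swap (X (.inl (a 0))) := by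
  simp only [halfHexagon, map_add, boundary_mul, boundary_X, swap_X, Sum.swap_inl]
  linear_combination CharTwo.add_self_eq_zero (X (.inr (a 1)) : Chain (W ⊕ W)) +
    CharTwo.add_self_eq_zero (X (.inl (a 2)) : Chain (W ⊕ W))

theorem halfHexagon_mem {a : Fin 3 → W} (ha : Function.Injective a) :
    halfHexagon a ∈ chainsOn (deletedJoin (Set.range a) 1) := by
  have hedge {i j : Fin 3} (hij : i ≠ j) :
      X (.inl (a i)) * X (.inr (a j)) ∈ chainsOn (deletedJoin (Set.range a) 1) :=
    X_inl_mul_X_inr_mem_chainsOn_deletedJoin ⟨i, rfl⟩ ⟨j, rfl⟩ (ha.ne hij)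
  exact add_mem (add_mem (hedge (by decide)) (hedge (by decide))) (hedge (by decide))

variable {a : ℕ → Fin 3 → W}

theorem hexagonJoin_succ (n : ℕ) : hexagonJoin a (n + 1) =
    hexagonJoin a n * (halfHexagon (a n) + swap (halfHexagon (a n))) :=
  prod_range_succ _ _

theorem swap_hexagonJoin (n : ℕ) : swap (hexagonJoin a n) = hexagonJoin a n := by
  simp only [hexagonJoin, map_prod, map_add, swap_swap, add_comm]

theorem boundary_hexagonJoin (n : ℕ) : boundary (hexagonJoin a n) = 0 := by
  induction n with
  | zero => exact boundary_one
  | succ n ih =>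
    rw [hexagonJoin_succ, boundary_mul, ih, mul_zero, add_zero, map_add, boundary_swap,
      boundary_halfHexagon, map_add, swap_swap, add_comm (swap _), CharTwo.add_self_eq_zero,
      mul_zero]

theorem hemisphere_two_mul (i : ℕ) :
    hemisphere a (2 * i) = hexagonJoin a i * X (.inl (a i 0)) := by
  simp [hemisphere]

theorem hemisphere_two_mul_add_one (i : ℕ) :
    hemisphere a (2 * i + 1) = hexagonJoin a i * halfHexagon (a i) := by
  have hdiv : (2 * i + 1) / 2 = i := by omega
  simp [hemisphere, hdiv]

theorem boundary_hemisphere_succ (k : ℕ) :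
    boundary (hemisphere a (k + 1)) = hemisphere a k + swap (hemisphere a k) := by
  obtain ⟨i, rfl | rfl⟩ := k.even_or_odd'
  · rw [hemisphere_two_mul, hemisphere_two_mul_add_one, boundary_mul, boundary_hexagonJoin,
      boundary_halfHexagon, mul_zero, add_zero, map_mul, swap_hexagonJoin, mul_add]
  · rw [show 2 * i + 1 + 1 = 2 * (i + 1) by ring, hemisphere_two_mul, hemisphere_two_mul_add_one,
      boundary_mul, boundary_hexagonJoin, boundary_X, mul_zero, add_zero, mul_one,
      hexagonJoin_succ, map_mul, swap_hexagonJoin, mul_add]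

section Disjoint

variable {d : ℕ} (ha : ∀ i, Function.Injective (a i))
  (hdisj : (Set.Iic d).PairwiseDisjoint fun i ↦ Set.range (a i))

include ha hdisj

theorem hexagonJoin_mul_mem {n : ℕ} {p : Chain (W ⊕ W)} (hn : n ≤ d)
    (hp : p ∈ chainsOn (deletedJoin (Set.range (a n)) 1)) :
    hexagonJoin a n * p ∈ chainsOn (deletedJoin (⋃ i ≤ n, Set.range (a i)) (n + 1)) := by
  induction n generalizing p with
  | zero => simpa [hexagonJoin] using hp
  | succ n ih =>
    have hnew : Disjoint (⋃ i ≤ n, Set.range (a i)) (Set.range (a (n + 1))) := by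
      refine Set.disjoint_iUnion₂_left.2 fun i hi ↦ hdisj ?_ hn ?_
      · exact Set.mem_Iic.2 (by omega)
      · omega
    have hhex := halfHexagon_mem (ha n)
    rw [hexagonJoin_succ]
    have hmul := mul_mem_chainsOn_deletedJoin hnew
      (ih (by omega) (add_mem hhex (swap_mem_chainsOn_deletedJoin hhex))) hp
    exact chainsOn_mono (deletedJoin_mono (Set.biUnion_le_succ _ _).ge le_rfl) hmul

theorem isAntipodalTower_hemisphere :
    IsAntipodalTower (deletedJoin Set.univ (d + 1)) (2 * d + 1) (hemisphere a) where
  zero := ⟨.inl (a 0 0), by simp [hemisphere, hexagonJoin]⟩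
  boundary_succ k _ := boundary_hemisphere_succ k
  mem k hk := by
    refine chainsOn_mono (deletedJoin_mono (Set.subset_univ _) (by omega))
      (hexagonJoin_mul_mem ha hdisj (n := k / 2) (by omega) ?_)
    split_ifs
    · exact X_inl_mem_chainsOn_deletedJoin ⟨0, rfl⟩
    · exact halfHexagon_mem (ha _)

end Disjoint

theorem exists_isAntipodalTower_deletedJoin [Fintype W] {d : ℕ}
    (hW : 3 * (d + 1) ≤ Fintype.card W) :
    ∃ h : ℕ → Chain (W ⊕ W), IsAntipodalTower (deletedJoin Set.univ (d + 1)) (2 * d + 1) h := by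
  obtain ⟨e⟩ : Nonempty (Fin (d + 1) × Fin 3 ↪ W) :=
    Function.Embedding.nonempty_of_card_le (by simpa [mul_comm] using hW)
  refine ⟨_, isAntipodalTower_hemisphere (a := fun i j ↦ e (Fin.ofNat (d + 1) i, j))
    (fun i j k hjk ↦ by simpa using hjk) fun i hi j hj hij ↦ ?_⟩
  rw [Function.onFun, Set.disjoint_left]
  rintro _ ⟨k, rfl⟩ ⟨l, hl⟩
  have hmod : j % (d + 1) = i % (d + 1) :=
    congrArg Fin.val (congrArg Prod.fst (e.injective hl))
  rw [Nat.mod_eq_of_lt (Nat.lt_succ_of_le hi), Nat.mod_eq_of_lt (Nat.lt_succ_of_le hj)] at hmod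
  exact hij hmod.symm

variable [Fintype W] [Finite L] [NormedAddCommGroup E] [NormedSpace ℝ E] [FiniteDimensional ℝ E]

-- For `c = fun σ ↦ {B | B ⊆ σ}` this is the van Kampen–Flores theorem for affine maps; other
-- carriers account for maps that are affine on a subdivision.
theorem IsCarriedChainMap.exists_convexHull_inter_nonempty {d : ℕ}
    {φ : Chain W →ₗ[ZMod 2] Chain L} {c : Finset W → Set (Finset L)}
    (hφ : IsCarriedChainMap φ c) (hW : 3 * (d + 1) ≤ Fintype.card W)
    (hE : Module.finrank ℝ E = 2 * d) (x : L → E) :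
    ∃ σ τ : Finset W, Disjoint σ τ ∧ #σ ≤ d + 1 ∧ #τ ≤ d + 1 ∧ ∃ B ∈ c σ, ∃ C ∈ c τ,
      (convexHull ℝ (x '' B) ∩ convexHull ℝ (x '' C)).Nonempty := by
  obtain ⟨h, hh⟩ := exists_isAntipodalTower_deletedJoin hW
  rw [← hE] at hh
  obtain ⟨A, ⟨S, hS, hleft, hright⟩, hmeet⟩ := (hh.map hφ).exists_convexHull_inter_nonempty x
  exact ⟨S.toLeft, S.toRight, hS.1, hS.2.1.2, hS.2.2.2, A.toLeft, hleft, A.toRight, hright, hmeet⟩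

end DeletedJoin

section Nerve

variable {V W E : Type*}

/-- The sets `U v` realize the simplicial complex `Δ` as their nerve. -/
def IsNerve (Δ : Finset (Finset V)) (U : V → Set E) : Prop :=
  ∀ σ : Finset V, σ.Nonempty → (σ ∈ Δ ↔ (⋂ v ∈ σ, U v).Nonempty)

theorem exists_common_mem_of_mem_flags {σ : Finset W} {F : Finset (Finset W)}
    {B : Finset (Finset (Finset W))} (hF : F ∈ flags σ) (hB : B ∈ flags F) (hne : B.Nonempty) :
    ∃ ρ : Finset W, ρ.Nonempty ∧ ρ ⊆ σ ∧ ∀ G ∈ B, ρ ∈ G := by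
  obtain ⟨G, hG, hmin⟩ := exists_min_image B card hne
  obtain ⟨ρ, hρ⟩ := (hB.1 G hG).1
  obtain ⟨hρne, hρσ⟩ := hF.1 ρ ((hB.1 G hG).2 hρ)
  refine ⟨ρ, hρne, hρσ, fun G' hG' ↦ ?_⟩
  obtain h | h := hB.2.total hG hG'
  · exact h hρ
  · exact eq_of_subset_of_card_le h (hmin G' hG') ▸ hρ

open scoped Classical in
/-- The barycentric subdivision of the `(n - 1)`-skeleton of the simplex with vertex set `W`: the
flags of nonempty subsets of `W` with at most `n` elements. -/
noncomputable def sdSkeleton (W : Type*) [Fintype W] (n : ℕ) : Finset (Finset (Finset W)) :=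
  {F | F ∈ flags univ ∧ ∀ ρ ∈ F, #ρ ≤ n}

variable [Fintype W] {n : ℕ} {F G : Finset (Finset W)}

theorem mem_sdSkeleton :
    F ∈ sdSkeleton W n ↔
      (∀ ρ ∈ F, ρ.Nonempty ∧ #ρ ≤ n) ∧ IsChain (· ⊆ ·) (F : Set (Finset W)) := by
  classical
  rw [sdSkeleton, mem_filter_univ]
  simp only [flags, Set.mem_ofPred_eq, subset_univ, and_true, forall₂_and, and_right_comm]

theorem mem_sdSkeleton_of_subset (hF : F ∈ sdSkeleton W n) (hG : G ⊆ F) : G ∈ sdSkeleton W n := by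
  rw [mem_sdSkeleton] at hF ⊢
  exact ⟨fun ρ hρ ↦ hF.1 ρ (hG hρ), hF.2.mono hG⟩

theorem mem_sdSkeleton_of_mem_flags {σ : Finset W} (hF : F ∈ flags σ) (hσ : #σ ≤ n) :
    F ∈ sdSkeleton W n :=
  mem_sdSkeleton.2 ⟨fun ρ hρ ↦ ⟨(hF.1 ρ hρ).1, (card_le_card (hF.1 ρ hρ).2).trans hσ⟩, hF.2⟩

theorem card_le_of_mem_sdSkeleton (hF : F ∈ sdSkeleton W n) : #F ≤ n := by
  rw [mem_sdSkeleton] at hF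
  have hinj : Set.InjOn card (F : Set (Finset W)) := by
    intro ρ hρ ρ' hρ' hcard
    obtain h | h := hF.2.total hρ hρ'
    · exact eq_of_subset_of_card_le h hcard.ge
    · exact (eq_of_subset_of_card_le h hcard.le).symm
  have hmaps : Set.MapsTo card F (Icc 1 n) := fun ρ hρ ↦
    mem_Icc.2 ⟨card_pos.2 (hF.1 ρ hρ).1, (hF.1 ρ hρ).2⟩
  simpa using card_le_card_of_injOn card hmaps hinj

theorem exists_mem_sdSkeleton_card_eq (hn : n ≤ Fintype.card W) :
    ∃ F ∈ sdSkeleton W n, #F = n := by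
  obtain ⟨e⟩ : Nonempty (Fin n ↪ W) := Function.Embedding.nonempty_of_card_le (by simpa using hn)
  let f (i : Fin n) : Finset W := (Iic i).map e
  have hmono : Monotone f := fun i j hij ↦ map_subset_map.2 (Iic_subset_Iic.2 hij)
  have hinj : Function.Injective f := fun i j hij ↦ by
    simpa [← coe_inj, Set.Iic_inj] using map_injective e hij
  refine ⟨univ.map ⟨f, hinj⟩, mem_sdSkeleton.2 ⟨?_, ?_⟩, by simp⟩
  · intro ρ hρ
    obtain ⟨i, -, rfl⟩ := mem_map.1 hρ
    simp [f, ← card_pos]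
  · simpa using hmono.isChain_range

theorem IsNerve.disjoint_of_disjoint {U : Finset W → Set E} (hU : IsNerve (sdSkeleton W n) U)
    {ρ ρ' : Finset W} (hρ : ρ.Nonempty) (hρ' : ρ'.Nonempty) (h : Disjoint ρ ρ') :
    Disjoint (U ρ) (U ρ') := by
  classical
  refine Set.disjoint_left.2 fun z hz hz' ↦ ?_
  have hmem : {ρ, ρ'} ∈ sdSkeleton W n := (hU _ (by simp)).2 ⟨z, by simp [hz, hz']⟩
  obtain hle | hle := (mem_sdSkeleton.1 hmem).2.total (x := ρ) (y := ρ') (by simp) (by simp)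
  · exact hρ.ne_empty (h.eq_bot_of_le hle)
  · exact hρ'.ne_empty (h.symm.eq_bot_of_le hle)

theorem IsNerve.exists_forall_mem [Nonempty E] {Δ : Finset (Finset V)} {U : V → Set E}
    (hU : IsNerve Δ U) : ∃ x : Finset V → E, ∀ σ ∈ Δ, ∀ v ∈ σ, x σ ∈ U v := by
  have hpoint (σ : Finset V) : ∃ z : E, σ ∈ Δ → ∀ v ∈ σ, z ∈ U v := by
    by_cases h : σ.Nonempty ∧ σ ∈ Δ
    · obtain ⟨z, hz⟩ := (hU σ h.1).1 h.2
      exact ⟨z, fun _ v hv ↦ Set.mem_iInter₂.1 hz v hv⟩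
    · exact ⟨Classical.arbitrary E, fun hσ v hv ↦ (h ⟨⟨v, hv⟩, hσ⟩).elim⟩
  choose x hx using hpoint
  exact ⟨x, hx⟩

theorem exists_convexHull_image_subset [AddCommGroup E] [Module ℝ E]
    {U : Finset W → Set E} (hconv : ∀ ρ, Convex ℝ (U ρ))
    {x : Finset (Finset W) → E} (hx : ∀ F ∈ sdSkeleton W n, ∀ ρ ∈ F, x F ∈ U ρ) {σ : Finset W}
    (hσ : #σ ≤ n) {B : Finset (Finset (Finset W))} (hB : B ∈ ⋃ F ∈ flags σ, flags F)
    (hne : B.Nonempty) :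
    ∃ ρ : Finset W, ρ.Nonempty ∧ ρ ⊆ σ ∧ convexHull ℝ (x '' B) ⊆ U ρ := by
  obtain ⟨F, hF, hBF⟩ := Set.mem_iUnion₂.1 hB
  obtain ⟨ρ, hρ, hρσ, hmem⟩ := exists_common_mem_of_mem_flags hF hBF hne
  refine ⟨ρ, hρ, hρσ, convexHull_min (Set.image_subset_iff.2 fun G hG ↦ ?_) (hconv ρ)⟩
  have hGF := mem_sdSkeleton_of_subset (mem_sdSkeleton_of_mem_flags hF hσ) (hBF.1 G hG).2
  exact hx G hGF ρ (hmem G hG)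

theorem not_isNerve_sdSkeleton [NormedAddCommGroup E] [NormedSpace ℝ E] [FiniteDimensional ℝ E]
    {d : ℕ} (hW : 3 * (d + 1) ≤ Fintype.card W) (hE : Module.finrank ℝ E = 2 * d)
    {U : Finset W → Set E} (hconv : ∀ ρ, Convex ℝ (U ρ)) : ¬ IsNerve (sdSkeleton W (d + 1)) U := by
  classical
  intro hU
  obtain ⟨x, hx⟩ := hU.exists_forall_mem
  obtain ⟨σ, τ, hστ, hσ, hτ, B, hB, C, hC, z, hzB, hzC⟩ :=
    (isCarriedChainMap_sd.comp isCarriedChainMap_sd).exists_convexHull_inter_nonempty hW hE x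
  have hnonempty {A : Finset (Finset (Finset W))} (hz : z ∈ convexHull ℝ (x '' A)) :
      A.Nonempty := by
    simpa using convexHull_nonempty_iff.1 ⟨z, hz⟩
  obtain ⟨ρ, hρ, hρσ, hρB⟩ := exists_convexHull_image_subset hconv hx hσ hB (hnonempty hzB)
  obtain ⟨ρ', hρ', hρτ, hρC⟩ := exists_convexHull_image_subset hconv hx hτ hC (hnonempty hzC)
  have hdisj := hU.disjoint_of_disjoint hρ hρ' (hστ.mono hρσ hρτ)
  exact Set.disjoint_left.1 hdisj (hρB hzB) (hρC hzC)

end Nerve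

end VanKampenFlores

open VanKampenFlores in
/-- **Tancer's tightness theorem.** For every `d ≥ 1` there exists a finite abstract
simplicial complex `Δ` of dimension `d` on some finite vertex set `V` that is not
`2d`-representable: no family `(U_v)_{v ∈ V}` of convex subsets of `ℝ^{2d}` satisfies
that a nonempty `σ ⊆ V` is a face of `Δ` if and only if `⋂_{v ∈ σ} U_v ≠ ∅`. -/
theorem tancer_tightness (d : ℕ) (hd : 1 ≤ d) :
    ∃ (V : Type) (_ : Fintype V) (_ : DecidableEq V) (Δ : Finset (Finset V)),
      (∀ σ ∈ Δ, ∀ τ ⊆ σ, τ ∈ Δ) ∧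
      (∀ σ ∈ Δ, σ.card ≤ d + 1) ∧
      (∃ σ ∈ Δ, σ.card = d + 1) ∧
      ¬ ∃ U : V → Set (Fin (2 * d) → ℝ),
          (∀ v, Convex ℝ (U v)) ∧
          ∀ σ : Finset V, σ.Nonempty →
            (σ ∈ Δ ↔ (⋂ v ∈ σ, U v).Nonempty) := by
  have hW : 3 * (d + 1) ≤ Fintype.card (Fin (3 * (d + 1))) := (Fintype.card_fin _).ge
  refine ⟨Finset (Fin (3 * (d + 1))), inferInstance, inferInstance, sdSkeleton _ (d + 1),
    fun _ hσ _ hτ ↦ mem_sdSkeleton_of_subset hσ hτ, fun _ hσ ↦ card_le_of_mem_sdSkeleton hσ,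
    exists_mem_sdSkeleton_card_eq (by omega), ?_⟩
  rintro ⟨U, hconv, hU⟩
  exact not_isNerve_sdSkeleton hW (by simp) hconv hU
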